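/- Let α ∈ [0,1] and let A, B be positive definite n×n complex matrices. Then A #_α B is log-majorized by the weighted geometric mean of the decreasingly ordered eigenvalues: for every k = 1,…,n−1, ∏_{j=1}^k μ_j(A #_α B) ≤ ∏_{j=1}^k μ_j(A)^{1-α} μ_j(B)^{α}, and for k = n equality holds: ∏_{j=1}^n μ_j(A #_α B) = ∏_{j=1}^n μ_j(A)^{1-α} μ_j(B)^{α}. -/

import Mathlib

open scoped ComplexOrder

section Defs

variable {n : ℕ}

/-- eigenvalues of a Hermitian matrix listed in increasing order -/
noncomputable def eigUp {A : Matrix (Fin n) (Fin n) ℂ} (hA : A.IsHermitian) : Fin n → ℝ :=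
  fun i => hA.eigenvalues (Tuple.sort hA.eigenvalues i)

/-- eigenvalues of a Hermitian matrix listed in decreasing order: `eigDown hA i = μ_{i+1}(A)` -/
noncomputable def eigDown {A : Matrix (Fin n) (Fin n) ℂ} (hA : A.IsHermitian) : Fin n → ℝ :=
  fun i => eigUp hA i.rev

/-- the product of the `k` smallest eigenvalues, `∏_{j=1}^k μ_{n+1-j}(A)` -/
noncomputable def prodSmall (A : Matrix (Fin n) (Fin n) ℂ) (k : ℕ) : ℝ :=
  if hA : A.IsHermitian then
    ∏ i ∈ Finset.univ.filter (fun i : Fin n => (i : ℕ) < k), eigUp hA i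
  else 0

/-- the product of the `k` largest eigenvalues, `∏_{j=1}^k μ_j(A)` -/
noncomputable def prodLarge (A : Matrix (Fin n) (Fin n) ℂ) (k : ℕ) : ℝ :=
  if hA : A.IsHermitian then
    ∏ i ∈ Finset.univ.filter (fun i : Fin n => (i : ℕ) < k), eigDown hA i
  else 0

/-- the sum of the `k` smallest eigenvalues, `∑_{j=1}^k μ_{n+1-j}(A)` -/
noncomputable def sumSmall (A : Matrix (Fin n) (Fin n) ℂ) (k : ℕ) : ℝ :=
  if hA : A.IsHermitian then
    ∑ i ∈ Finset.univ.filter (fun i : Fin n => (i : ℕ) < k), eigUp hA i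
  else 0

/-- A doubly concave function on an interval `Ω ⊆ [0,∞)`. -/
structure DoublyConcaveOn (f : ℝ → ℝ) (Ω : Set ℝ) : Prop where
  subset_Ici : Ω ⊆ Set.Ici (0 : ℝ)
  nonneg : ∀ x ∈ Ω, 0 ≤ f x
  continuousOn : ContinuousOn f Ω
  concaveOn : ConcaveOn ℝ Ω f
  geomConcave : ∀ x ∈ Ω, ∀ y ∈ Ω, Real.sqrt (f x * f y) ≤ f (Real.sqrt (x * y))

/-- `𝔼_p(Z) := (𝔼(Z^p))^{1/p}` -/
noncomputable def Ep {n m : ℕ} (E : Matrix (Fin n) (Fin n) ℂ →ₗ[ℂ] Matrix (Fin m) (Fin m) ℂ)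
    (p : ℝ) (Z : Matrix (Fin n) (Fin n) ℂ) : Matrix (Fin m) (Fin m) ℂ :=
  cfc (fun x : ℝ => x ^ (1 / p)) (E (cfc (fun x : ℝ => x ^ p) Z))

/-- the power `p`-mean `A β_p B := ((A^p + B^p)/2)^{1/p}` -/
noncomputable def betaP (p : ℝ) (A B : Matrix (Fin n) (Fin n) ℂ) : Matrix (Fin n) (Fin n) ℂ :=
  cfc (fun x : ℝ => x ^ (1 / p))
    ((2 : ℂ)⁻¹ • (cfc (fun x : ℝ => x ^ p) A + cfc (fun x : ℝ => x ^ p) B))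

noncomputable def sqrtM (A : Matrix (Fin n) (Fin n) ℂ) : Matrix (Fin n) (Fin n) ℂ :=
  cfc Real.sqrt A

noncomputable def invSqrtM (A : Matrix (Fin n) (Fin n) ℂ) : Matrix (Fin n) (Fin n) ℂ :=
  cfc (fun x : ℝ => (Real.sqrt x)⁻¹) A

/-- operator mean with representing function `h`: `A σ B = A^{1/2} h(A^{-1/2} B A^{-1/2}) A^{1/2}` -/
noncomputable def opMean (h : ℝ → ℝ) (A B : Matrix (Fin n) (Fin n) ℂ) :
    Matrix (Fin n) (Fin n) ℂ :=
  sqrtM A * cfc h (invSqrtM A * B * invSqrtM A) * sqrtM A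

/-- the weighted geometric mean `A #_α B` -/
noncomputable def sharp (α : ℝ) (A B : Matrix (Fin n) (Fin n) ℂ) : Matrix (Fin n) (Fin n) ℂ :=
  sqrtM A * cfc (fun x : ℝ => x ^ α) (invSqrtM A * B * invSqrtM A) * sqrtM A

/-- the (real) determinant of a Hermitian matrix -/
noncomputable def rdet (A : Matrix (Fin n) (Fin n) ℂ) : ℝ := (A.det).re

open Classical in
/-- the derived anti-norm `‖A‖_! = ‖A^{-p}‖^{-1/p}` for invertible positive `A`, `0` otherwise. -/
noncomputable def derivedAntiNorm (N : Matrix (Fin n) (Fin n) ℂ → ℝ) (p : ℝ)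
    (A : Matrix (Fin n) (Fin n) ℂ) : ℝ :=
  if IsUnit A.det then (N (cfc (fun x : ℝ => x ^ (-p)) A)) ^ (-(1 / p)) else 0

end Defs

/-!
Write `A = X Xᴴ` and `B = X diag(d) Xᴴ` with `X = A^{1/2} U`, where the unitary `U` diagonalizes
`A^{-1/2} B A^{-1/2}`; then `A #_α B = X diag(d ^ α) Xᴴ`. For `Y` with `k` rows, the Cauchy–Binet
formula expands `det (Y diag(d) Yᴴ)` as a combination, with nonnegative weights depending only on
`Y`, of products of `k` entries of `d`, so Hölder's inequality for these weights gives
`det (V (A #_α B) Vᴴ) ≤ det (V A Vᴴ) ^ (1 - α) * det (V B Vᴴ) ^ α` for every `V` with `k` rows.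
The product of the `k` largest eigenvalues of a positive semidefinite `M` is the maximum of
`det (V M Vᴴ)` over `V` with `V Vᴴ = 1`, again by Cauchy–Binet. Take `V` optimal for `A #_α B`.
Equality for `k = n` is multiplicativity of the determinant.
-/

open Matrix Finset

section CauchyBinet

variable {ι κ R : Type*} [Fintype ι] [Fintype κ] [DecidableEq κ] [CommRing R]

theorem det_mul_eq_sum_prod_mul_det_submatrix (P : Matrix κ ι R) (Q : Matrix ι κ R) :
    (P * Q).det = ∑ f : κ → ι, (∏ i, P i (f i)) * (Q.submatrix f id).det := by
  have rows_eq : P * Q = fun i => ∑ j, P i j • Q j := by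
    ext i j
    simp [Matrix.mul_apply]
  calc (P * Q).det
      = detRowAlternating.toMultilinearMap fun i => ∑ j, P i j • Q j := congrArg det rows_eq
    _ = ∑ f : κ → ι, detRowAlternating.toMultilinearMap fun i => P i (f i) • Q (f i) :=
        MultilinearMap.map_sum _ fun i j => P i j • Q j
    _ = ∑ f : κ → ι, (∏ i, P i (f i)) * (Q.submatrix f id).det :=
        sum_congr rfl fun f _ =>
          MultilinearMap.map_smul_univ _ (fun i => P i (f i)) fun i => Q (f i)

/-- The Cauchy–Binet formula. Summing over all maps `κ → ι` instead of over the subsets of `ι` of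
size `card κ` counts every minor `(card κ)!` times. -/
theorem factorial_mul_det_mul (P : Matrix κ ι R) (Q : Matrix ι κ R) :
    ((Fintype.card κ).factorial : R) * (P * Q).det =
      ∑ f : κ → ι, (P.submatrix id f).det * (Q.submatrix f id).det := by
  have expand_permuted (σ : Equiv.Perm κ) : (P * Q).det =
      ∑ f : κ → ι, (Equiv.Perm.sign σ * ∏ i, P i (f (σ i))) * (Q.submatrix f id).det := by
    rw [det_mul_eq_sum_prod_mul_det_submatrix, ← (σ.symm.arrowCongr (Equiv.refl ι)).sum_comp]
    refine sum_congr rfl fun f _ => ?_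
    have det_rows : (Q.submatrix (f ∘ σ) id).det =
        Equiv.Perm.sign σ * (Q.submatrix f id).det := det_permute σ (Q.submatrix f id)
    change (∏ i, P i (f (σ i))) * (Q.submatrix (f ∘ σ) id).det = _
    rw [det_rows]
    ring
  calc ((Fintype.card κ).factorial : R) * (P * Q).det
      = ∑ _σ : Equiv.Perm κ, (P * Q).det := by
        rw [sum_const, card_univ, Fintype.card_perm, nsmul_eq_mul]
    _ = ∑ f : κ → ι, ∑ σ : Equiv.Perm κ,
          (Equiv.Perm.sign σ * ∏ i, P i (f (σ i))) * (Q.submatrix f id).det := by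
        rw [sum_comm]
        exact sum_congr rfl fun σ _ => expand_permuted σ
    _ = ∑ f : κ → ι, (P.submatrix id f).det * (Q.submatrix f id).det := by
        refine sum_congr rfl fun f _ => ?_
        rw [← det_transpose (P.submatrix id f), det_apply' (P.submatrix id f)ᵀ, sum_mul]
        rfl

end CauchyBinet

section DiagCongr

variable {𝕜 ι κ l : Type*} [RCLike 𝕜] [Fintype ι] [DecidableEq ι]

/-- The matrix `Y diag(d) Yᴴ`, for a real weight vector `d` and a possibly rectangular `Y`. -/
def diagCongr (Y : Matrix κ ι 𝕜) (d : ι → ℝ) : Matrix κ κ 𝕜 :=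
  Y * diagonal (fun i => (d i : 𝕜)) * Yᴴ

theorem diagCongr_one (Y : Matrix κ ι 𝕜) : diagCongr Y 1 = Y * Yᴴ := by
  simp [diagCongr]

theorem mul_diagCongr_mul_conjTranspose [Fintype κ] (V : Matrix l κ 𝕜) (Y : Matrix κ ι 𝕜)
    (d : ι → ℝ) : V * diagCongr Y d * Vᴴ = diagCongr (V * Y) d := by
  simp only [diagCongr, conjTranspose_mul, Matrix.mul_assoc]

theorem det_diagCongr_of_square (X : Matrix ι ι 𝕜) (d : ι → ℝ) :
    (diagCongr X d).det = ((‖X.det‖ ^ 2 * ∏ i, d i : ℝ) : 𝕜) := by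
  rw [diagCongr, det_mul, det_mul, det_diagonal, det_conjTranspose, mul_right_comm,
    RCLike.star_def, RCLike.mul_conj]
  push_cast
  rfl

theorem cfc_eq_diagCongr {A : Matrix ι ι 𝕜} (hA : A.IsHermitian) (h : ℝ → ℝ) :
    cfc h A = diagCongr (hA.eigenvectorUnitary : Matrix ι ι 𝕜) (h ∘ hA.eigenvalues) :=
  hA.cfc_eq h

theorem eq_diagCongr_eigenvalues {A : Matrix ι ι 𝕜} (hA : A.IsHermitian) :
    A = diagCongr (hA.eigenvectorUnitary : Matrix ι ι 𝕜) hA.eigenvalues :=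
  hA.spectral_theorem

end DiagCongr

section MinorWeight

variable {𝕜 ι κ : Type*} [RCLike 𝕜] [Fintype κ] [DecidableEq κ]

/-- The weight of `f` in the Cauchy–Binet expansion of `det (Y * diagonal d * Yᴴ)`: the squared
modulus of the maximal minor of `Y` with columns `f`. The factorial compensates for the
orderings of the columns. -/
noncomputable def minorWeight (Y : Matrix κ ι 𝕜) (f : κ → ι) : ℝ :=
  ‖(Y.submatrix id f).det‖ ^ 2 / (Fintype.card κ).factorial

theorem minorWeight_nonneg (Y : Matrix κ ι 𝕜) (f : κ → ι) : 0 ≤ minorWeight Y f := by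
  unfold minorWeight
  positivity

theorem minorWeight_eq_zero_of_not_injective (Y : Matrix κ ι 𝕜) {f : κ → ι}
    (hf : ¬ Function.Injective f) : minorWeight Y f = 0 := by
  obtain ⟨i, j, hij, hne⟩ := Function.not_injective_iff.1 hf
  have det_eq_zero : (Y.submatrix id f).det = 0 :=
    det_zero_of_column_eq hne fun l => by simp only [submatrix_apply, hij]
  simp [minorWeight, det_eq_zero]

variable [Fintype ι]

theorem det_diagCongr [DecidableEq ι] (Y : Matrix κ ι 𝕜) (d : ι → ℝ) :
    (diagCongr Y d).det = ((∑ f : κ → ι, minorWeight Y f * ∏ i, d (f i) : ℝ) : 𝕜) := by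
  have factorial_ne_zero : ((Fintype.card κ).factorial : 𝕜) ≠ 0 :=
    Nat.cast_ne_zero.2 (Nat.factorial_ne_zero _)
  apply mul_left_cancel₀ factorial_ne_zero
  rw [diagCongr, factorial_mul_det_mul, RCLike.ofReal_sum, mul_sum]
  refine sum_congr rfl fun f _ => ?_
  have left_minor : (Y * diagonal (fun i => (d i : 𝕜))).submatrix id f =
      Y.submatrix id f * diagonal (fun i => (d (f i) : 𝕜)) := by
    ext i j
    simp
  have right_minor : Yᴴ.submatrix f id = (Y.submatrix id f)ᴴ := rfl
  rw [left_minor, right_minor, det_mul, det_diagonal, det_conjTranspose, minorWeight,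
    mul_right_comm, RCLike.star_def, RCLike.mul_conj]
  push_cast
  field_simp

theorem sum_minorWeight (Y : Matrix κ ι 𝕜) :
    ∑ f : κ → ι, minorWeight Y f = RCLike.re (Y * Yᴴ).det := by
  classical
  simp [← diagCongr_one, det_diagCongr]

end MinorWeight

section LogConvexity

theorem sum_mul_rpow_le_rpow_mul_rpow {ι : Type*} (s : Finset ι) {w x : ι → ℝ}
    (hw : ∀ i, 0 ≤ w i) (hx : ∀ i, 0 ≤ x i) {α : ℝ} (hα0 : 0 ≤ α) (hα1 : α ≤ 1) :
    ∑ i ∈ s, w i * x i ^ α ≤ (∑ i ∈ s, w i) ^ (1 - α) * (∑ i ∈ s, w i * x i) ^ α := by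
  rcases hα0.eq_or_lt with rfl | hα
  · simp
  · simpa only [inv_inv, Real.rpow_rpow_inv (hx _) hα.ne'] using
      Real.inner_le_weight_mul_Lp_of_nonneg s ((one_le_inv₀ hα).2 hα1) w (fun i => x i ^ α) hw
        fun i => Real.rpow_nonneg (hx i) α

theorem re_det_diagCongr_rpow_le {𝕜 ι κ : Type*} [RCLike 𝕜] [Fintype ι] [Fintype κ]
    [DecidableEq ι] [DecidableEq κ] (Y : Matrix κ ι 𝕜) {d : ι → ℝ} (hd : ∀ i, 0 ≤ d i) {α : ℝ}
    (hα0 : 0 ≤ α) (hα1 : α ≤ 1) :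
    RCLike.re (diagCongr Y ((· ^ α) ∘ d)).det ≤
      RCLike.re (Y * Yᴴ).det ^ (1 - α) * RCLike.re (diagCongr Y d).det ^ α := by
  simp only [det_diagCongr, ← sum_minorWeight, RCLike.ofReal_re, Function.comp_apply,
    Real.finsetProd_rpow _ _ fun _ _ => hd _]
  exact sum_mul_rpow_le_rpow_mul_rpow univ (minorWeight_nonneg Y)
    (fun f => prod_nonneg fun i _ => hd (f i)) hα0 hα1

end LogConvexity

section Compression

variable {𝕜 ι κ : Type*} [RCLike 𝕜] [Fintype ι] [DecidableEq ι] {A : Matrix ι ι 𝕜}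

theorem exists_compression_eq_diagonal [DecidableEq κ] (hA : A.IsHermitian) {f : κ → ι}
    (hf : Function.Injective f) :
    ∃ V : Matrix κ ι 𝕜, V * Vᴴ = 1 ∧
      V * A * Vᴴ = diagonal (fun i => (hA.eigenvalues (f i) : 𝕜)) := by
  let U : Matrix ι ι 𝕜 := (hA.eigenvectorUnitary : Matrix ι ι 𝕜)
  have unitary : Uᴴ * U = 1 := Unitary.coe_star_mul_self _
  have diagonalized : Uᴴ * A * U = diagonal (fun i => (hA.eigenvalues i : 𝕜)) :=
    (Unitary.conjStarAlgAut_star_apply _ _).symm.trans hA.conjStarAlgAut_star_eigenvectorUnitary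
  have adjoint : (Uᴴ.submatrix f id)ᴴ = U.submatrix id f := by
    rw [conjTranspose_submatrix, conjTranspose_conjTranspose]
  refine ⟨Uᴴ.submatrix f id, ?_, ?_⟩
  · rw [adjoint, ← submatrix_mul _ _ _ _ _ Function.bijective_id, unitary, submatrix_one _ hf]
  · calc Uᴴ.submatrix f id * A * (Uᴴ.submatrix f id)ᴴ
        = (Uᴴ * A * U).submatrix f f := by
          rw [adjoint, submatrix_mul _ _ _ _ _ Function.bijective_id,
            submatrix_mul _ _ _ _ _ Function.bijective_id, submatrix_id_id]
      _ = diagonal (fun i => (hA.eigenvalues (f i) : 𝕜)) := by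
          rw [diagonalized, submatrix_diagonal _ _ hf]
          rfl

theorem re_det_compression_le [Fintype κ] [DecidableEq κ] (hA : A.IsHermitian)
    {V : Matrix κ ι 𝕜} (hV : V * Vᴴ = 1) {c : ℝ}
    (hc : ∀ f : κ → ι, Function.Injective f → ∏ i, hA.eigenvalues (f i) ≤ c) :
    RCLike.re (V * A * Vᴴ).det ≤ c := by
  let U : Matrix ι ι 𝕜 := (hA.eigenvectorUnitary : Matrix ι ι 𝕜)
  have compression_eq : V * A * Vᴴ = diagCongr (V * U) hA.eigenvalues := by
    rw [← mul_diagCongr_mul_conjTranspose, ← eq_diagCongr_eigenvalues]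
  have isometry : (V * U) * (V * U)ᴴ = 1 := by
    have unitary : U * Uᴴ = 1 := Unitary.coe_mul_star_self _
    rw [conjTranspose_mul, Matrix.mul_assoc, ← Matrix.mul_assoc U, unitary, Matrix.one_mul, hV]
  have sum_weights : ∑ f, minorWeight (V * U) f = 1 := by
    rw [sum_minorWeight, isometry, det_one, RCLike.one_re]
  rw [compression_eq, det_diagCongr, RCLike.ofReal_re]
  calc ∑ f, minorWeight (V * U) f * ∏ i, hA.eigenvalues (f i)
      ≤ ∑ f, minorWeight (V * U) f * c := by
        refine sum_le_sum fun f _ => ?_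
        by_cases hf : Function.Injective f
        · exact mul_le_mul_of_nonneg_left (hc f hf) (minorWeight_nonneg _ _)
        · simp only [minorWeight_eq_zero_of_not_injective _ hf, zero_mul, le_refl]
    _ = c := by rw [← sum_mul, sum_weights, one_mul]

end Compression

theorem prod_le_prod_of_isLowerSet {ι R : Type*} [LinearOrder ι] [CommSemiring R] [PartialOrder R]
    [IsOrderedRing R] {a : ι → R} (ha : Antitone a) (ha0 : ∀ i, 0 ≤ a i) {S T : Finset ι}
    (hT : IsLowerSet (T : Set ι)) (hST : #S = #T) : ∏ i ∈ S, a i ≤ ∏ i ∈ T, a i := by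
  have card_sdiff : Fintype.card ↥(S \ T) = Fintype.card ↥(T \ S) := by
    simpa only [Fintype.card_coe] using card_sdiff_comm hST
  let e : ↥(S \ T) ≃ ↥(T \ S) := Fintype.equivOfCardEq card_sdiff
  have e_le (i : ↥(S \ T)) : (e i : ι) ≤ i := le_of_not_ge fun hi =>
    (mem_sdiff.1 i.2).2 (hT hi (mem_sdiff.1 (e i).2).1)
  have sdiff_le : ∏ i ∈ S \ T, a i ≤ ∏ i ∈ T \ S, a i :=
    calc ∏ i ∈ S \ T, a i = ∏ i : ↥(S \ T), a i := (prod_coe_sort _ _).symm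
      _ ≤ ∏ i : ↥(S \ T), a (e i) := prod_le_prod (fun i _ => ha0 i) fun i _ => ha (e_le i)
      _ = ∏ i : ↥(T \ S), a i := e.prod_comp fun i => a i
      _ = ∏ i ∈ T \ S, a i := prod_coe_sort _ _
  rw [← prod_inter_mul_prod_sdiff S T, ← prod_inter_mul_prod_sdiff T S, inter_comm T S]
  exact mul_le_mul_of_nonneg_left sdiff_le (prod_nonneg fun i _ => ha0 i)

section OrderedEigenvalues

variable {n : ℕ} {A : Matrix (Fin n) (Fin n) ℂ}

theorem exists_perm_eigDown_eq (hA : A.IsHermitian) :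
    ∃ e : Equiv.Perm (Fin n), eigDown hA = hA.eigenvalues ∘ e :=
  ⟨Fin.revPerm.trans (Tuple.sort hA.eigenvalues), rfl⟩

theorem eigDown_antitone (hA : A.IsHermitian) : Antitone (eigDown hA) := fun _ _ hij =>
  Tuple.monotone_sort hA.eigenvalues (Fin.rev_le_rev.2 hij)

theorem eigDown_nonneg (hA : A.PosSemidef) (i : Fin n) : 0 ≤ eigDown hA.isHermitian i :=
  hA.eigenvalues_nonneg _

theorem prod_eigDown (hA : A.IsHermitian) : ∏ i, eigDown hA i = RCLike.re A.det := by
  obtain ⟨e, he⟩ := exists_perm_eigDown_eq hA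
  rw [he, hA.det_eq_prod_eigenvalues, ← RCLike.ofReal_prod, RCLike.ofReal_re]
  exact Equiv.prod_comp e hA.eigenvalues

theorem re_det_compression_le_prod_eigDown (hA : A.PosSemidef) {T : Finset (Fin n)}
    (hT : IsLowerSet (T : Set (Fin n))) {V : Matrix T (Fin n) ℂ} (hV : V * Vᴴ = 1) :
    RCLike.re (V * A * Vᴴ).det ≤ ∏ i ∈ T, eigDown hA.isHermitian i := by
  obtain ⟨e, he⟩ := exists_perm_eigDown_eq hA.isHermitian
  refine re_det_compression_le hA.isHermitian hV fun f hf => ?_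
  let g : T ↪ Fin n := ⟨e.symm ∘ f, e.symm.injective.comp hf⟩
  calc ∏ i, hA.isHermitian.eigenvalues (f i)
      = ∏ i ∈ univ.map g, eigDown hA.isHermitian i := by simp [he, g]
    _ ≤ ∏ i ∈ T, eigDown hA.isHermitian i :=
        prod_le_prod_of_isLowerSet (eigDown_antitone _) (eigDown_nonneg hA) hT (by simp)

theorem exists_re_det_compression_eq_prod_eigDown (hA : A.IsHermitian) (T : Finset (Fin n)) :
    ∃ V : Matrix T (Fin n) ℂ, V * Vᴴ = 1 ∧
      RCLike.re (V * A * Vᴴ).det = ∏ i ∈ T, eigDown hA i := by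
  obtain ⟨e, he⟩ := exists_perm_eigDown_eq hA
  obtain ⟨V, hV, compression_eq⟩ :=
    exists_compression_eq_diagonal hA (e.injective.comp (Subtype.val_injective (p := (· ∈ T))))
  refine ⟨V, hV, ?_⟩
  rw [compression_eq, det_diagonal, ← RCLike.ofReal_prod, RCLike.ofReal_re, he]
  exact prod_coe_sort T fun i => hA.eigenvalues (e i)

theorem prod_eigDown_rpow_mul_rpow {B : Matrix (Fin n) (Fin n) ℂ} (hA : A.PosSemidef)
    (hB : B.PosSemidef) (p q : ℝ) (T : Finset (Fin n)) :
    ∏ i ∈ T, (eigDown hA.isHermitian i ^ p * eigDown hB.isHermitian i ^ q) =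
      (∏ i ∈ T, eigDown hA.isHermitian i) ^ p * (∏ i ∈ T, eigDown hB.isHermitian i) ^ q := by
  rw [prod_mul_distrib, Real.finsetProd_rpow _ _ fun i _ => eigDown_nonneg hA i,
    Real.finsetProd_rpow _ _ fun i _ => eigDown_nonneg hB i]

end OrderedEigenvalues

section OperatorMean

variable {n : ℕ} {A B : Matrix (Fin n) (Fin n) ℂ}

theorem isHermitian_sqrtM (A : Matrix (Fin n) (Fin n) ℂ) : (sqrtM A).IsHermitian :=
  cfc_predicate Real.sqrt A

theorem isHermitian_invSqrtM (A : Matrix (Fin n) (Fin n) ℂ) : (invSqrtM A).IsHermitian :=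
  cfc_predicate (fun x : ℝ => (Real.sqrt x)⁻¹) A

theorem sqrtM_mul_sqrtM (hA : A.PosSemidef) : sqrtM A * sqrtM A = A := by
  have mul_self_sqrt : Set.EqOn (fun x => √x * √x) id (spectrum ℝ A) := by
    rw [hA.isHermitian.spectrum_real_eq_range_eigenvalues]
    rintro _ ⟨i, rfl⟩
    exact Real.mul_self_sqrt (hA.eigenvalues_nonneg i)
  rw [sqrtM, ← cfc_mul _ _ A, cfc_congr mul_self_sqrt]
  exact cfc_id ℝ A hA.isHermitian

theorem sqrtM_mul_invSqrtM (hA : A.PosDef) : sqrtM A * invSqrtM A = 1 := by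
  have mul_inv_sqrt : Set.EqOn (fun x => √x * (√x)⁻¹) 1 (spectrum ℝ A) := by
    rw [hA.isHermitian.spectrum_real_eq_range_eigenvalues]
    rintro _ ⟨i, rfl⟩
    exact mul_inv_cancel₀ (Real.sqrt_ne_zero'.2 (hA.eigenvalues_pos i))
  rw [sqrtM, invSqrtM, ← cfc_mul _ _ A (by fun_prop) (A.finite_real_spectrum.continuousOn _),
    cfc_congr mul_inv_sqrt]
  exact cfc_one ℝ A hA.isHermitian

theorem isHermitian_invSqrtM_mul_mul_invSqrtM (A : Matrix (Fin n) (Fin n) ℂ)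
    (hB : B.IsHermitian) : (invSqrtM A * B * invSqrtM A).IsHermitian := by
  simpa only [(isHermitian_invSqrtM A).eq] using
    isHermitian_mul_mul_conjTranspose (invSqrtM A) hB

theorem isHermitian_opMean (h : ℝ → ℝ) (A B : Matrix (Fin n) (Fin n) ℂ) :
    (opMean h A B).IsHermitian := by
  have isHermitian_cfc : (cfc h (invSqrtM A * B * invSqrtM A)).IsHermitian := cfc_predicate h _
  simpa only [opMean, (isHermitian_sqrtM A).eq] using
    isHermitian_mul_mul_conjTranspose (sqrtM A) isHermitian_cfc

theorem opMean_one (hA : A.PosSemidef) (hB : B.IsHermitian) : opMean 1 A B = A := by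
  have cfc_one_eq : cfc (1 : ℝ → ℝ) (invSqrtM A * B * invSqrtM A) = 1 :=
    cfc_one ℝ _ (isHermitian_invSqrtM_mul_mul_invSqrtM A hB)
  rw [opMean, cfc_one_eq, Matrix.mul_one, sqrtM_mul_sqrtM hA]

theorem opMean_id (hA : A.PosDef) (hB : B.IsHermitian) : opMean id A B = B := by
  have right_inv : invSqrtM A * sqrtM A = 1 := mul_eq_one_comm.1 (sqrtM_mul_invSqrtM hA)
  have cfc_id_eq : cfc (id : ℝ → ℝ) (invSqrtM A * B * invSqrtM A) = invSqrtM A * B * invSqrtM A :=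
    cfc_id ℝ _ (isHermitian_invSqrtM_mul_mul_invSqrtM A hB)
  rw [opMean, cfc_id_eq]
  calc sqrtM A * (invSqrtM A * B * invSqrtM A) * sqrtM A
      = (sqrtM A * invSqrtM A) * B * (invSqrtM A * sqrtM A) := by simp only [Matrix.mul_assoc]
    _ = B := by rw [sqrtM_mul_invSqrtM hA, right_inv, Matrix.one_mul, Matrix.mul_one]

theorem exists_opMean_eq_diagCongr (A : Matrix (Fin n) (Fin n) ℂ) (hB : B.PosSemidef) :
    ∃ (X : Matrix (Fin n) (Fin n) ℂ) (d : Fin n → ℝ), (∀ i, 0 ≤ d i) ∧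
      ∀ h : ℝ → ℝ, opMean h A B = diagCongr X (h ∘ d) := by
  have posSemidef : (invSqrtM A * B * invSqrtM A).PosSemidef := by
    simpa only [(isHermitian_invSqrtM A).eq] using hB.mul_mul_conjTranspose_same (invSqrtM A)
  refine ⟨sqrtM A * (posSemidef.isHermitian.eigenvectorUnitary : Matrix (Fin n) (Fin n) ℂ), _,
    posSemidef.eigenvalues_nonneg, fun h => ?_⟩
  rw [← mul_diagCongr_mul_conjTranspose (sqrtM A), ← cfc_eq_diagCongr, (isHermitian_sqrtM A).eq,
    opMean]

end OperatorMean

section WeightedGeometricMean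

variable {n : ℕ} {A B : Matrix (Fin n) (Fin n) ℂ}

theorem isHermitian_sharp (α : ℝ) (A B : Matrix (Fin n) (Fin n) ℂ) : (sharp α A B).IsHermitian :=
  isHermitian_opMean (· ^ α) A B

theorem exists_eq_diagCongr_sharp (hA : A.PosDef) (hB : B.PosSemidef) :
    ∃ (X : Matrix (Fin n) (Fin n) ℂ) (d : Fin n → ℝ), (∀ i, 0 ≤ d i) ∧ A = X * Xᴴ ∧
      B = diagCongr X d ∧ ∀ α : ℝ, sharp α A B = diagCongr X ((· ^ α) ∘ d) := by
  obtain ⟨X, d, hd, opMean_eq⟩ := exists_opMean_eq_diagCongr A hB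
  refine ⟨X, d, hd, ?_, ?_, fun α => opMean_eq _⟩
  · rw [← diagCongr_one, ← opMean_one hA.posSemidef hB.isHermitian]
    exact opMean_eq 1
  · exact (opMean_id hA hB.isHermitian).symm.trans (opMean_eq id)

theorem re_det_compression_sharp_le {κ : Type*} [Fintype κ] [DecidableEq κ] (hA : A.PosDef)
    (hB : B.PosSemidef) {α : ℝ} (hα0 : 0 ≤ α) (hα1 : α ≤ 1) (V : Matrix κ (Fin n) ℂ) :
    RCLike.re (V * sharp α A B * Vᴴ).det ≤
      RCLike.re (V * A * Vᴴ).det ^ (1 - α) * RCLike.re (V * B * Vᴴ).det ^ α := by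
  obtain ⟨X, d, hd, hAX, hBX, sharp_eq⟩ := exists_eq_diagCongr_sharp hA hB
  have compression_left : V * A * Vᴴ = (V * X) * (V * X)ᴴ := by
    rw [hAX, ← diagCongr_one, mul_diagCongr_mul_conjTranspose, diagCongr_one]
  rw [compression_left, sharp_eq, hBX]
  simp only [mul_diagCongr_mul_conjTranspose]
  exact re_det_diagCongr_rpow_le (V * X) hd hα0 hα1

theorem re_det_sharp (hA : A.PosDef) (hB : B.PosSemidef) (α : ℝ) :
    RCLike.re (sharp α A B).det = RCLike.re A.det ^ (1 - α) * RCLike.re B.det ^ α := by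
  obtain ⟨X, d, hd, hAX, hBX, sharp_eq⟩ := exists_eq_diagCongr_sharp hA hB
  have re_det_diagCongr (c : Fin n → ℝ) :
      RCLike.re (diagCongr X c).det = ‖X.det‖ ^ 2 * ∏ i, c i := by
    rw [det_diagCongr_of_square, RCLike.ofReal_re]
  have re_det_left : RCLike.re A.det = ‖X.det‖ ^ 2 := by
    rw [hAX, ← diagCongr_one, re_det_diagCongr]
    simp
  have norm_det_pos : 0 < ‖X.det‖ ^ 2 := re_det_left ▸ (RCLike.pos_iff.1 hA.det_pos).1
  have re_det_right : RCLike.re B.det = ‖X.det‖ ^ 2 * ∏ i, d i := by rw [hBX, re_det_diagCongr]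
  calc RCLike.re (sharp α A B).det
      = ‖X.det‖ ^ 2 * (∏ i, d i) ^ α := by
        rw [sharp_eq, re_det_diagCongr]
        exact congrArg _ (Real.finsetProd_rpow _ _ (fun i _ => hd i) α)
    _ = (‖X.det‖ ^ 2) ^ (1 - α) * (‖X.det‖ ^ 2 * ∏ i, d i) ^ α := by
        rw [Real.mul_rpow norm_det_pos.le (prod_nonneg fun i _ => hd i), ← mul_assoc,
          ← Real.rpow_add norm_det_pos, sub_add_cancel, Real.rpow_one]
    _ = RCLike.re A.det ^ (1 - α) * RCLike.re B.det ^ α := by rw [re_det_left, re_det_right]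

theorem prod_eigDown_sharp_le (hA : A.PosDef) (hB : B.PosSemidef) {α : ℝ} (hα0 : 0 ≤ α)
    (hα1 : α ≤ 1) {T : Finset (Fin n)} (hT : IsLowerSet (T : Set (Fin n))) :
    ∏ i ∈ T, eigDown (isHermitian_sharp α A B) i ≤
      ∏ i ∈ T, (eigDown hA.isHermitian i ^ (1 - α) * eigDown hB.isHermitian i ^ α) := by
  obtain ⟨V, hV, optimal⟩ :=
    exists_re_det_compression_eq_prod_eigDown (isHermitian_sharp α A B) T
  have compression_nonneg {M : Matrix (Fin n) (Fin n) ℂ} (hM : M.PosSemidef) :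
      0 ≤ RCLike.re (V * M * Vᴴ).det :=
    (RCLike.nonneg_iff.1 (hM.mul_mul_conjTranspose_same V).det_nonneg).1
  have left_le := re_det_compression_le_prod_eigDown hA.posSemidef hT hV
  have right_le := re_det_compression_le_prod_eigDown hB hT hV
  calc ∏ i ∈ T, eigDown (isHermitian_sharp α A B) i
      = RCLike.re (V * sharp α A B * Vᴴ).det := optimal.symm
    _ ≤ RCLike.re (V * A * Vᴴ).det ^ (1 - α) * RCLike.re (V * B * Vᴴ).det ^ α :=
        re_det_compression_sharp_le hA hB hα0 hα1 V
    _ ≤ (∏ i ∈ T, eigDown hA.isHermitian i) ^ (1 - α) *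
          (∏ i ∈ T, eigDown hB.isHermitian i) ^ α :=
        mul_le_mul
          (Real.rpow_le_rpow (compression_nonneg hA.posSemidef) left_le (sub_nonneg.2 hα1))
          (Real.rpow_le_rpow (compression_nonneg hB) right_le hα0)
          (Real.rpow_nonneg (compression_nonneg hB) _)
          (Real.rpow_nonneg (prod_nonneg fun i _ => eigDown_nonneg hA.posSemidef i) _)
    _ = ∏ i ∈ T, (eigDown hA.isHermitian i ^ (1 - α) * eigDown hB.isHermitian i ^ α) :=
        (prod_eigDown_rpow_mul_rpow hA.posSemidef hB (1 - α) α T).symm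

end WeightedGeometricMean

theorem stmt_10_general {n : ℕ} {α : ℝ} (hα0 : 0 ≤ α) (hα1 : α ≤ 1)
    {A B : Matrix (Fin n) (Fin n) ℂ} (hA : A.PosDef) (hB : B.PosSemidef) :
    (∀ k : ℕ, prodLarge (sharp α A B) k ≤
      ∏ i ∈ univ.filter (fun i : Fin n => (i : ℕ) < k),
        (eigDown hA.isHermitian i ^ (1 - α) * eigDown hB.isHermitian i ^ α)) ∧
    prodLarge (sharp α A B) n =
      ∏ i : Fin n, (eigDown hA.isHermitian i ^ (1 - α) * eigDown hB.isHermitian i ^ α) := by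
  have prodLarge_eq (k : ℕ) : prodLarge (sharp α A B) k =
      ∏ i ∈ univ.filter (fun i : Fin n => (i : ℕ) < k), eigDown (isHermitian_sharp α A B) i :=
    dif_pos (isHermitian_sharp α A B)
  refine ⟨fun k => ?_, ?_⟩
  · have isLowerSet :
        IsLowerSet ((univ.filter fun i : Fin n => (i : ℕ) < k : Finset (Fin n)) : Set (Fin n)) := by
      rw [coe_filter_univ]
      exact fun _ _ hji hi => lt_of_le_of_lt (Fin.le_def.1 hji) hi
    exact prodLarge_eq k ▸ prod_eigDown_sharp_le hA hB hα0 hα1 isLowerSet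
  · calc prodLarge (sharp α A B) n
        = ∏ i, eigDown (isHermitian_sharp α A B) i := by
          simp only [prodLarge_eq, Fin.is_lt, filter_true]
      _ = RCLike.re A.det ^ (1 - α) * RCLike.re B.det ^ α := by
          rw [prod_eigDown, re_det_sharp hA hB]
      _ = ∏ i, (eigDown hA.isHermitian i ^ (1 - α) * eigDown hB.isHermitian i ^ α) := by
          rw [prod_eigDown_rpow_mul_rpow hA.posSemidef hB, prod_eigDown, prod_eigDown]

theorem stmt_10 {n : ℕ} (α : ℝ) (hα0 : 0 ≤ α) (hα1 : α ≤ 1)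
    (A B : Matrix (Fin n) (Fin n) ℂ) (hA : A.PosDef) (hB : B.PosDef) :
    (∀ k : ℕ, 1 ≤ k → k ≤ n - 1 →
      prodLarge (sharp α A B) k ≤
        ∏ i ∈ Finset.univ.filter (fun i : Fin n => (i : ℕ) < k),
          (eigDown hA.isHermitian i ^ (1 - α) * eigDown hB.isHermitian i ^ α)) ∧
    prodLarge (sharp α A B) n =
      ∏ i : Fin n, (eigDown hA.isHermitian i ^ (1 - α) * eigDown hB.isHermitian i ^ α) :=
  (stmt_10_general hα0 hα1 hA hB.posSemidef).imp_left fun h k _ _ => h k
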